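/- For every integer n ≥ 5, there exists a tree G on 2n vertices that is not well-covered and satisfies I(G,x) = I(P_n*,x) as polynomials. (In particular, the conjecture of Levit and Mandrescu—that any connected graph independence equivalent to a well-covered tree is itself a well-covered tree—is false.) -/

import Mathlib

/-!
The tree `Gₙ` consists of a fixed base tree on ten vertices with a comb `P_{n-5}*` attached by an
edge from the end of its spine to a distinguished base vertex `r`. All graphs involved are induced
on initial segments of graphs on `ℕ` given by parent functions (`treeParent` for `Gₙ`, `combParent`
for `Pₙ*`), which makes them trees (`parentGraph_isTree`).

Attaching to a vertex `r` of a graph `G` a new vertex with a pendant vertex gives a graph `G'` with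
`I(G') = (1 + x) I(G) + x I(G - r)` and, for the new vertex `v`, `I(G' - v) = (1 + x) I(G)`
(`indepPolyOn_range_add_two`). So for both families the polynomials are determined by the pair
`(I(G), I(G - r))` at `n = 5`. An explicit calculation shows that these pairs agree: the base tree
has the polynomial of `P₅*` (`tree_ten`), and deleting `r` gives
`(1 + x)³ (1 + 2x) (1 + 4x) = (1 + x) I(P₄*)` in both cases (`tree_ten_erase`). Hence
`I(Gₙ) = I(Pₙ*)` for all `n ≥ 5` (`tree_eq_comb`).

`Gₙ` is not well-covered: the base tree has maximal independent sets of sizes `4` and `5`, and both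
stay maximal independent once all pendant vertices of the comb are added (`tree_not_wellCovered`).
-/

open Polynomial SimpleGraph

/-- A finset of vertices is independent: pairwise nonadjacent. -/
def IsIndepFinset {V : Type*} (G : SimpleGraph V) (s : Finset V) : Prop :=
  ∀ u ∈ s, ∀ v ∈ s, ¬ G.Adj u v

open Classical in
/-- The independence polynomial of a finite graph, with real coefficients. -/
noncomputable def indepPoly {V : Type*} [Fintype V] (G : SimpleGraph V) : Polynomial ℝ :=
  ∑ s : Finset V, if IsIndepFinset G s then (X : Polynomial ℝ) ^ s.card else 0

/-- `xi G` : the largest real root of the independence polynomial of `G`. -/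
noncomputable def xi {V : Type*} [Fintype V] (G : SimpleGraph V) : ℝ :=
  sSup {x : ℝ | (indepPoly G).eval x = 0}

/-- `Pre H G` (`H ⪯ G`) : `I(H,x) ≥ I(G,x)` for all `x ∈ [ξ(G), 0]`. -/
def Pre {V W : Type*} [Fintype V] [Fintype W] (H : SimpleGraph W) (G : SimpleGraph V) : Prop :=
  ∀ x ∈ Set.Icc (xi G) 0, (indepPoly G).eval x ≤ (indepPoly H).eval x

/-- `SPre H G` (`H ≺ G`). -/
def SPre {V W : Type*} [Fintype V] [Fintype W] (H : SimpleGraph W) (G : SimpleGraph V) : Prop :=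
  Pre H G ∧ indepPoly H ≠ indepPoly G

open Classical in
/-- A graph is well-covered if all maximal independent sets have the same size. -/
def WellCovered {V : Type*} (G : SimpleGraph V) : Prop :=
  ∀ s t : Finset V,
    IsIndepFinset G s → (∀ v ∉ s, ¬ IsIndepFinset G (insert v s)) →
    IsIndepFinset G t → (∀ v ∉ t, ¬ IsIndepFinset G (insert v t)) →
    s.card = t.card

/-- A connected unicyclic graph: connected with as many edges as vertices. -/
def Unicyclic {V : Type*} [Fintype V] (G : SimpleGraph V) : Prop :=
  G.Connected ∧ G.edgeSet.ncard = Fintype.card V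

/-- The graph star (corona with `K₁`) of `G`: each vertex `inl v` gets a pendant
vertex `inr v`. -/
def corona {V : Type*} (G : SimpleGraph V) : SimpleGraph (V ⊕ V) :=
  SimpleGraph.fromRel (fun a b =>
    match a, b with
    | Sum.inl u, Sum.inl v => G.Adj u v
    | Sum.inl u, Sum.inr v => u = v
    | _, _ => False)

/-- `Ugraph n` (`U_n`, `n ≥ 3`): a triangle `0,1,2` with `n - 3` pendant vertices attached
to vertex `0`. -/
def Ugraph (n : ℕ) : SimpleGraph (Fin n) :=
  SimpleGraph.fromRel (fun i j => i.val = 0 ∨ (i.val = 1 ∧ j.val = 2))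

/-- `Dgraph n` (`D_n`, `n ≥ 4`): a path `0,1,...,n-1` plus the chord `{0,2}`, i.e. a
triangle with a path on `n - 3` vertices attached. -/
def Dgraph (n : ℕ) : SimpleGraph (Fin n) :=
  SimpleGraph.fromRel (fun i j => j.val = i.val + 1 ∨ (i.val = 0 ∧ j.val = 2))

/-- `starGraph n` (`S_n = K_{1,n-1}`): vertex `0` adjacent to all other vertices. -/
def starGraph (n : ℕ) : SimpleGraph (Fin n) :=
  SimpleGraph.fromRel (fun i _ => i.val = 0)

/-- `Mgraph n` (`M_n`, odd `n ≥ 5`): a triangle `0,1,2` with `(n-3)/2` paths of length two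
attached at vertex `0`; the middle vertices are the odd indices `3,5,...,n-2` and the leaf
attached to middle vertex `i` is `i + 1`. -/
def Mgraph (n : ℕ) : SimpleGraph (Fin n) :=
  SimpleGraph.fromRel (fun i j =>
    (i.val = 0 ∧ (j.val ≤ 2 ∨ j.val % 2 = 1)) ∨ (i.val = 1 ∧ j.val = 2) ∨
    (i.val % 2 = 1 ∧ 3 ≤ i.val ∧ j.val = i.val + 1))

/-- `SPgraph g k ℓ` (`G(g,k,ℓ)`, for `g ∈ {3,5}` and `k + ℓ ≥ 1`): a cycle on the vertices
`0,...,g-1`, a copy of `P_k*` on the vertices `g,...,g+2k-1` (path vertices at even offsets,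
each followed by its pendant vertex) joined to the cycle vertex `0` by an edge to the
path end `g`, and a copy of `P_ℓ*` on the vertices `g+2k,...,g+2k+2ℓ-1` joined to the cycle
vertex `2` by an edge to the path end `g+2k`. -/
def SPgraph (g k ℓ : ℕ) : SimpleGraph (Fin (g + 2*k + 2*ℓ)) :=
  SimpleGraph.fromRel (fun i j =>
    (i.val < g ∧ j.val < g ∧ (j.val = i.val + 1 ∨ (i.val = 0 ∧ j.val = g - 1))) ∨
    (i.val = 0 ∧ 0 < k ∧ j.val = g) ∨
    (g ≤ i.val ∧ i.val < g + 2*k ∧ (i.val - g) % 2 = 0 ∧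
      (j.val = i.val + 1 ∨ (j.val = i.val + 2 ∧ j.val < g + 2*k))) ∨
    (i.val = 2 ∧ 0 < ℓ ∧ j.val = g + 2*k) ∨
    (g + 2*k ≤ i.val ∧ (i.val - (g + 2*k)) % 2 = 0 ∧
      (j.val = i.val + 1 ∨ j.val = i.val + 2)))

/-- `Gtree n` (`G_{2n}`, `n ≥ 5`): the tree on `2n` vertices with path `v_1 … v_n` at
indices `0,…,n-1`, `z_1` at index `n`, `y_1, y_2` at `n+1, n+2`, `x_1, x_2` at `n+3, n+4`
(with `v_3 z_1`, `v_3 y_1`, `y_1 y_2`, `v_5 x_1`, `x_1 x_2` edges), and pendant vertices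
`w_j` at index `n + j - 1` attached to `v_j` for `6 ≤ j ≤ n`. -/
def Gtree (n : ℕ) : SimpleGraph (Fin (2*n)) :=
  SimpleGraph.fromRel (fun a b =>
    (a.val + 1 = b.val ∧ b.val < n) ∨
    (a.val = 2 ∧ (b.val = n ∨ b.val = n + 1)) ∨
    (a.val = n + 1 ∧ b.val = n + 2) ∨
    (a.val = 4 ∧ b.val = n + 3) ∨
    (a.val = n + 3 ∧ b.val = n + 4) ∨
    (5 ≤ a.val ∧ a.val < n ∧ b.val = n + a.val))

/-! ### Induced independence polynomials and the vertex recursion -/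

/-- The independence polynomial of the subgraph of `H` induced on the finite set `S`. -/
noncomputable def indepPolyOn (H : SimpleGraph ℕ) (S : Finset ℕ) : Polynomial ℝ :=
  open Classical in
  ∑ s ∈ S.powerset, if IsIndepFinset H s then (X : Polynomial ℝ) ^ s.card else 0

lemma indepPoly_eq_indepPolyOn {V : Type*} [Fintype V] (G : SimpleGraph V) (H : SimpleGraph ℕ)
    (f : V ↪ ℕ) (hf : ∀ u v, G.Adj u v ↔ H.Adj (f u) (f v)) :
    indepPoly G = indepPolyOn H (Finset.univ.map f) := by
  classical
  unfold indepPoly indepPolyOn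
  refine Finset.sum_bij (fun s _ => s.map f) ?_ ?_ ?_ ?_
  · intro s _
    rw [Finset.mem_powerset]
    exact Finset.map_subset_map.2 (Finset.subset_univ s)
  · intro s _ t _ h
    exact Finset.map_injective f h
  · intro t ht
    rw [Finset.mem_powerset, Finset.subset_map_iff] at ht
    obtain ⟨s, -, rfl⟩ := ht
    exact ⟨s, Finset.mem_univ _, rfl⟩
  · intro s _
    have : IsIndepFinset G s ↔ IsIndepFinset H (s.map f) := by
      simp [IsIndepFinset, hf]
    simp [this]

/-- The vertex recursion `I(G) = I(G - a) + x · I(G - N[a])`; here `T = S \ N(a)`. -/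
lemma indepPolyOn_insert (H : SimpleGraph ℕ) {a : ℕ} {S T : Finset ℕ} (ha : a ∉ S)
    (hT : ∀ m, m ∈ T ↔ m ∈ S ∧ ¬ H.Adj a m) :
    indepPolyOn H (insert a S) = indepPolyOn H S + X * indepPolyOn H T := by
  classical
  unfold indepPolyOn
  rw [Finset.sum_powerset_insert ha, Finset.mul_sum]
  congr 1
  have hTS : T.powerset ⊆ S.powerset :=
    Finset.powerset_mono.2 fun m hm => ((hT m).1 hm).1
  rw [← Finset.sum_subset hTS]
  · refine Finset.sum_congr rfl fun s hs => ?_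
    rw [Finset.mem_powerset] at hs
    have has : a ∉ s := fun h => ha ((hT a).1 (hs h)).1
    have : IsIndepFinset H (insert a s) ↔ IsIndepFinset H s := by
      constructor
      · intro h u hu v hv
        exact h u (Finset.mem_insert_of_mem hu) v (Finset.mem_insert_of_mem hv)
      · intro h u hu v hv
        rw [Finset.mem_insert] at hu hv
        rcases hu with rfl | hu <;> rcases hv with rfl | hv
        · exact H.irrefl
        · exact ((hT v).1 (hs hv)).2
        · exact fun e => ((hT u).1 (hs hu)).2 e.symm
        · exact h u hu v hv
    rw [Finset.card_insert_of_notMem has, pow_succ']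
    simp [this]
  · intro s hs hsT
    rw [Finset.mem_powerset] at hs hsT
    rw [if_neg]
    intro h
    refine hsT fun m hm => (hT m).2 ⟨hs hm, ?_⟩
    exact h a (Finset.mem_insert_self _ _) m (Finset.mem_insert_of_mem hm)

lemma indepPolyOn_empty (H : SimpleGraph ℕ) : indepPolyOn H ∅ = 1 := by
  simp [indepPolyOn, IsIndepFinset]

lemma indepPolyOn_insert_isolated (H : SimpleGraph ℕ) {a : ℕ} {S : Finset ℕ} (ha : a ∉ S)
    (h : ∀ m ∈ S, ¬ H.Adj a m) :
    indepPolyOn H (insert a S) = (1 + X) * indepPolyOn H S := by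
  rw [indepPolyOn_insert H (T := S) ha]
  · ring
  · intro m
    exact ⟨fun hm => ⟨hm, h m hm⟩, fun hm => hm.1⟩

/-- The edge `ab` is a connected component `K₂` next to `S`. -/
lemma indepPolyOn_insert_edge (H : SimpleGraph ℕ) {a b : ℕ} {S : Finset ℕ} (ha : a ∉ S)
    (hb : b ∉ S) (hab : H.Adj a b) (h : ∀ m ∈ S, ¬ H.Adj a m) (h' : ∀ m ∈ S, ¬ H.Adj b m) :
    indepPolyOn H (insert a (insert b S)) = (1 + 2 * X) * indepPolyOn H S := by
  rw [indepPolyOn_insert H (T := S), indepPolyOn_insert_isolated H hb h']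
  · ring
  · rw [Finset.mem_insert, not_or]
    exact ⟨hab.ne, ha⟩
  · intro m
    rw [Finset.mem_insert]
    constructor
    · exact fun hm => ⟨Or.inr hm, h m hm⟩
    · rintro ⟨rfl | hm, hn⟩
      · exact absurd hab hn
      · exact hm

/-- Attaching to the vertex `r` a new vertex `k` that carries a pendant vertex `k + 1`. -/
lemma indepPolyOn_range_add_two (H : SimpleGraph ℕ) (k r : ℕ)
    (h₀ : ∀ m < k, H.Adj k m ↔ m = r) (h₁ : ∀ m < k, ¬ H.Adj (k + 1) m)
    (h₂ : H.Adj k (k + 1)) :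
    indepPolyOn H (Finset.range (k + 2)) =
      (1 + X) * indepPolyOn H (Finset.range k)
        + X * indepPolyOn H ((Finset.range k).erase r) := by
  have e : Finset.range (k + 2) = insert k (insert (k + 1) (Finset.range k)) := by
    ext m
    simp only [Finset.mem_insert, Finset.mem_range]
    omega
  rw [e, indepPolyOn_insert H (T := (Finset.range k).erase r),
    indepPolyOn_insert_isolated H (a := k + 1) (S := Finset.range k)]
  · simp
  · intro m hm
    exact h₁ m (Finset.mem_range.1 hm)
  · simp
  · intro m
    simp only [Finset.mem_erase, Finset.mem_insert, Finset.mem_range]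
    constructor
    · rintro ⟨hr, hm⟩
      exact ⟨Or.inr hm, fun h => hr ((h₀ m hm).1 h)⟩
    · rintro ⟨rfl | hm, hn⟩
      · exact absurd h₂ hn
      · exact ⟨fun h => hn ((h₀ m hm).2 h), hm⟩

/-- The recursion of `I(Pₙ*, x)`, valid for any graph whose last two pairs `k, k + 1` and
`k + 2, k + 3`, each a spine vertex with its pendant vertex, continue a spine `… – k – (k + 2)`. -/
lemma indepPolyOn_range_add_four (H : SimpleGraph ℕ) (k : ℕ)
    (h₀ : ∀ m < k + 2, H.Adj (k + 2) m ↔ m = k) (h₁ : ∀ m < k + 2, ¬ H.Adj (k + 3) m)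
    (h₂ : H.Adj (k + 2) (k + 3)) (h₃ : ∀ m < k, ¬ H.Adj (k + 1) m) :
    indepPolyOn H (Finset.range (k + 4)) =
      (1 + X) * indepPolyOn H (Finset.range (k + 2))
        + X * (1 + X) * indepPolyOn H (Finset.range k) := by
  rw [indepPolyOn_range_add_two H (k + 2) k h₀ h₁ h₂]
  have e : (Finset.range (k + 2)).erase k = insert (k + 1) (Finset.range k) := by
    ext m
    simp only [Finset.mem_erase, Finset.mem_insert, Finset.mem_range]
    omega
  rw [e, indepPolyOn_insert_isolated H (by simp) fun m hm => h₃ m (Finset.mem_range.1 hm)]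
  ring

/-! ### Trees given by a parent function -/

/-- The graph on `ℕ` in which each `m` is joined to its parent `p m`
(no edge arises when `p m = m`). -/
def parentGraph (p : ℕ → ℕ) : SimpleGraph ℕ :=
  SimpleGraph.fromRel fun a b => p a = b

lemma parentGraph_adj (p : ℕ → ℕ) (a b : ℕ) :
    (parentGraph p).Adj a b ↔ a ≠ b ∧ (p a = b ∨ p b = a) := by
  simp [parentGraph]

/-- A parent function with `p m < m` for `m > 0` gives a tree on each initial segment: every vertex
reaches `0`, and there are at most `N - 1` edges `{m, p m}`. -/
lemma parentGraph_isTree (p : ℕ → ℕ) (hp₀ : p 0 = 0) (hp : ∀ m, 0 < m → p m < m) (N : ℕ)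
    (hN : 0 < N) : ((parentGraph p).comap (Fin.val : Fin N → ℕ)).IsTree := by
  classical
  set G := (parentGraph p).comap (Fin.val : Fin N → ℕ) with hG
  have hadj : ∀ a b : Fin N, G.Adj a b ↔ a.val ≠ b.val ∧ (p a = b ∨ p b = a) := fun a b => by
    rw [hG, SimpleGraph.comap_adj, parentGraph_adj]
  have hreach : ∀ m (hm : m < N), G.Reachable ⟨0, hN⟩ ⟨m, hm⟩ := by
    intro m
    induction m using Nat.strong_induction_on with
    | _ m ih =>
      intro hm
      rcases Nat.eq_zero_or_pos m with rfl | h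
      · exact SimpleGraph.Reachable.refl _
      · have hlt := hp m h
        refine (ih (p m) hlt (by omega)).trans (SimpleGraph.Adj.reachable ?_)
        rw [hadj]
        exact ⟨hlt.ne, Or.inr rfl⟩
  have hconn : G.Connected := by
    have : Nonempty (Fin N) := ⟨⟨0, hN⟩⟩
    exact ⟨fun u v => (hreach u u.2).symm.trans (hreach v v.2)⟩
  rw [SimpleGraph.isTree_iff_connected_and_card]
  refine ⟨hconn, le_antisymm ?_ hconn.card_vert_le_card_edgeSet_add_one⟩
  -- every edge is `{m, p m}` for some `m ≠ 0`
  let f : Fin N → Sym2 (Fin N) := fun m =>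
    if h : p m < N then s(m, ⟨p m, h⟩) else s(m, m)
  have hsub : G.edgeFinset ⊆ (Finset.univ.erase (⟨0, hN⟩ : Fin N)).image f := by
    intro e
    induction e using Sym2.ind with
    | _ a b =>
      intro he
      rw [SimpleGraph.mem_edgeFinset, SimpleGraph.mem_edgeSet, hadj] at he
      obtain ⟨hne, hab⟩ := he
      have hpos : ∀ x y : Fin N, x.val ≠ y.val → p x = y → x ≠ ⟨0, hN⟩ := by
        rintro x y hxy h rfl
        exact hxy (hp₀.symm.trans h)
      rw [Finset.mem_image]
      rcases hab with h | h
      · refine ⟨a, Finset.mem_erase.2 ⟨hpos a b hne h, Finset.mem_univ _⟩, ?_⟩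
        simp [f, h]
      · refine ⟨b, Finset.mem_erase.2 ⟨hpos b a hne.symm h, Finset.mem_univ _⟩, ?_⟩
        simp [f, h, Sym2.eq_swap]
  have hcard := (Finset.card_le_card hsub).trans Finset.card_image_le
  rw [Finset.card_erase_of_mem (Finset.mem_univ _), Finset.card_univ, Fintype.card_fin] at hcard
  rw [Nat.card_eq_fintype_card, ← SimpleGraph.edgeFinset_card, Nat.card_eq_fintype_card,
    Fintype.card_fin]
  omega

/-! ### The comb and the counterexample trees -/

/-- Parent function of the infinite comb: the spine is `0 – 2 – 4 – ⋯`, and each even `m` carries the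
pendant vertex `m + 1`. -/
def combParent (m : ℕ) : ℕ :=
  if m % 2 = 0 then m - 2 else m - 1

/-- Parent function of the counterexample trees. The vertices below `10` form the base tree:
a path `0 – 1 – 2 – 6 – 7` with a pendant vertex `3` and a pendant path `4 – 5` at `2`, and a pendant
path `8 – 9` at `7`. The vertices from `10` on form a comb whose spine `10 – 12 – ⋯` is attached
to `7`. -/
def treeParent (m : ℕ) : ℕ :=
  if m ≤ 1 then 0 else if m = 2 then 1 else if m = 3 then 2 else if m = 4 then 2
  else if m = 5 then 4 else if m = 6 then 2 else if m = 7 then 6 else if m = 8 then 7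
  else if m = 9 then 8 else if m = 10 then 7 else combParent m

lemma treeParent_of_le {m : ℕ} (hm : 11 ≤ m) : treeParent m = combParent m := by
  unfold treeParent
  rw [if_neg (by omega), if_neg (by omega), if_neg (by omega), if_neg (by omega),
    if_neg (by omega), if_neg (by omega), if_neg (by omega), if_neg (by omega),
    if_neg (by omega), if_neg (by omega)]

lemma treeParent_even {m : ℕ} (hm : 12 ≤ m) (h : m % 2 = 0) : treeParent m = m - 2 := by
  rw [treeParent_of_le (by omega), combParent, if_pos h]

lemma treeParent_odd {m : ℕ} (hm : 11 ≤ m) (h : m % 2 = 1) : treeParent m = m - 1 := by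
  rw [treeParent_of_le hm, combParent, if_neg (by omega)]

lemma treeParent_lt (m : ℕ) (hm : 0 < m) : treeParent m < m := by
  rcases le_or_gt 11 m with h | h
  · rw [treeParent_of_le h, combParent]
    split_ifs <;> omega
  · interval_cases m <;> decide

lemma treeParent_le (m : ℕ) : treeParent m ≤ m := by
  rcases Nat.eq_zero_or_pos m with rfl | h
  · decide
  · exact (treeParent_lt m h).le

lemma indepPoly_corona_pathGraph (n : ℕ) :
    indepPoly (corona (pathGraph n)) =
      indepPolyOn (parentGraph combParent) (Finset.range (2 * n)) := by
  -- spine vertex `i` goes to `2i`, its pendant vertex to `2i + 1`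
  let f : Fin n ⊕ Fin n ↪ ℕ :=
    ⟨Sum.elim (fun i => 2 * i.val) (fun i => 2 * i.val + 1), by
      rintro (a | a) (b | b) h <;> simp at h <;> first | omega | (simp; omega)⟩
  have hl : ∀ a, f (Sum.inl a) = 2 * a.val := fun _ => rfl
  have hr : ∀ a, f (Sum.inr a) = 2 * a.val + 1 := fun _ => rfl
  have hf : ∀ u v, (corona (pathGraph n)).Adj u v ↔ (parentGraph combParent).Adj (f u) (f v) := by
    rintro (a | a) (b | b) <;>
      simp only [corona, SimpleGraph.fromRel_adj, parentGraph_adj, pathGraph_adj, combParent,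
        hl, hr, Fin.ext_iff, ne_eq, Sum.inl.injEq, Sum.inr.injEq, reduceCtorEq] <;>
      grind
  rw [indepPoly_eq_indepPolyOn _ _ f hf]
  congr 1
  ext m
  simp only [Finset.mem_map, Finset.mem_univ, true_and, Finset.mem_range, Sum.exists, hl, hr]
  constructor
  · rintro (⟨a, rfl⟩ | ⟨a, rfl⟩) <;> omega
  · intro hm
    rcases Nat.even_or_odd' m with ⟨k, rfl | rfl⟩
    · exact Or.inl ⟨⟨k, by omega⟩, rfl⟩
    · exact Or.inr ⟨⟨k, by omega⟩, rfl⟩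

/-! ### Equality of the independence polynomials -/

lemma comb_rec (k : ℕ) (hk : k % 2 = 0) :
    indepPolyOn (parentGraph combParent) (Finset.range (k + 4)) =
      (1 + X) * indepPolyOn (parentGraph combParent) (Finset.range (k + 2))
        + X * (1 + X) * indepPolyOn (parentGraph combParent) (Finset.range k) := by
  apply indepPolyOn_range_add_four <;> simp only [parentGraph_adj, combParent] <;> grind

lemma tree_rec (k : ℕ) (hk : k % 2 = 0) (hk' : 10 ≤ k) :
    indepPolyOn (parentGraph treeParent) (Finset.range (k + 4)) =
      (1 + X) * indepPolyOn (parentGraph treeParent) (Finset.range (k + 2))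
        + X * (1 + X) * indepPolyOn (parentGraph treeParent) (Finset.range k) := by
  have h₁ : treeParent (k + 1) = k := treeParent_odd (by omega) (by omega)
  have h₂ : treeParent (k + 2) = k := treeParent_even (by omega) (by omega)
  have h₃ : treeParent (k + 3) = k + 2 := treeParent_odd (by omega) (by omega)
  apply indepPolyOn_range_add_four <;> simp only [parentGraph_adj, h₁, h₂, h₃]
  · intro m hm
    have := treeParent_le m
    omega
  · intro m hm
    have := treeParent_le m
    omega
  · simp
  · intro m hm
    have := treeParent_le m
    omega

lemma comb_zero : indepPolyOn (parentGraph combParent) (Finset.range 0) = 1 :=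
  indepPolyOn_empty _

lemma comb_two : indepPolyOn (parentGraph combParent) (Finset.range 2) = 1 + 2 * X := by
  have e : Finset.range 2 = {0, 1} := by decide
  rw [e, ← insert_empty_eq 1, indepPolyOn_insert_edge, indepPolyOn_empty] <;>
    simp [parentGraph_adj, combParent]

lemma comb_eight : indepPolyOn (parentGraph combParent) (Finset.range 8) =
    (1 + X) ^ 2 * (1 + 2 * X) * (1 + 4 * X) := by
  rw [comb_rec 4 rfl, comb_rec 2 rfl, comb_rec 0 rfl, comb_zero, comb_two]
  ring

lemma comb_ten : indepPolyOn (parentGraph combParent) (Finset.range 10) =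
    (1 + X) * (1 + 2 * X) * (1 + 4 * X) * (1 + X) ^ 2
      + X * (1 + X) ^ 2 * (1 + 5 * X + 5 * X ^ 2) := by
  rw [comb_rec 6 rfl, comb_eight, comb_rec 2 rfl, comb_rec 0 rfl, comb_zero, comb_two]
  ring

/-- The branch of the base tree at `7` that contains `6`; the recursion is applied at `2`. -/
lemma tree_seven : indepPolyOn (parentGraph treeParent) {0, 1, 2, 3, 4, 5, 6} =
    (1 + X) ^ 3 * (1 + 4 * X) := by
  have e : ({0, 1, 2, 3, 4, 5, 6} : Finset ℕ) = insert 2 {0, 1, 4, 5, 3, 6} := by decide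
  rw [e, indepPolyOn_insert _ (T := {0, 5}), indepPolyOn_insert_edge,
    indepPolyOn_insert_edge, indepPolyOn_insert_isolated (S := {6}),
    ← insert_empty_eq 6, indepPolyOn_insert_isolated,
    indepPolyOn_insert_isolated (S := {5}),
    ← insert_empty_eq 5, indepPolyOn_insert_isolated, indepPolyOn_empty]
  · ring
  case hT =>
    intro m
    simp only [parentGraph_adj, Finset.mem_insert, Finset.mem_singleton]
    constructor
    · rintro (rfl | rfl) <;> decide
    · rintro ⟨rfl | rfl | rfl | rfl | rfl | rfl, h⟩ <;> revert h <;> decide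
  all_goals simp [parentGraph_adj, treeParent]

/-- Deleting `7` from the base tree leaves the same polynomial as deleting the end of the spine
from `P₅*`, namely `(1 + x) I(P₄*, x)`. -/
lemma tree_ten_erase : indepPolyOn (parentGraph treeParent) ((Finset.range 10).erase 7) =
    (1 + X) * indepPolyOn (parentGraph combParent) (Finset.range 8) := by
  have e : (Finset.range 10).erase 7 = {8, 9, 0, 1, 2, 3, 4, 5, 6} := by decide
  rw [e, indepPolyOn_insert_edge, tree_seven, comb_eight]
  · ring
  all_goals simp [parentGraph_adj, treeParent]

lemma tree_ten : indepPolyOn (parentGraph treeParent) (Finset.range 10) =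
    indepPolyOn (parentGraph combParent) (Finset.range 10) := by
  have e : Finset.range 10 = insert 7 ((Finset.range 10).erase 7) := by decide
  -- the recursion is applied at `7` and then, in the branch that uses `7`, at `2`
  rw [comb_ten, e, indepPolyOn_insert _ (T := {9, 2, 0, 1, 4, 5, 3}), tree_ten_erase, comb_eight,
    indepPolyOn_insert_isolated, indepPolyOn_insert _ (T := {0, 5}), indepPolyOn_insert_edge,
    indepPolyOn_insert_edge,
    ← insert_empty_eq 3, indepPolyOn_insert_isolated,
    indepPolyOn_insert_isolated (S := {5}),
    ← insert_empty_eq 5, indepPolyOn_insert_isolated, indepPolyOn_empty]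
  · ring
  case hT =>
    intro m
    simp only [parentGraph_adj, Finset.mem_insert, Finset.mem_singleton]
    constructor
    · rintro (rfl | rfl) <;> decide
    · rintro ⟨rfl | rfl | rfl | rfl | rfl, h⟩ <;> revert h <;> decide
  case hT =>
    intro m
    simp only [parentGraph_adj, Finset.mem_insert, Finset.mem_singleton, Finset.mem_erase,
      Finset.mem_range]
    constructor
    · rintro (rfl | rfl | rfl | rfl | rfl | rfl | rfl) <;> decide
    · rintro ⟨⟨hne, hm⟩, h⟩
      interval_cases m <;> revert hne h <;> decide
  all_goals simp [parentGraph_adj, treeParent]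

/-- From `10` vertices on, the trees and the combs obey the same two-term recursion. -/
lemma tree_eq_comb (n : ℕ) :
    indepPolyOn (parentGraph treeParent) (Finset.range (2 * n + 10)) =
      indepPolyOn (parentGraph combParent) (Finset.range (2 * n + 10)) := by
  induction n using Nat.twoStepInduction with
  | zero => exact tree_ten
  | one =>
    have h : indepPolyOn (parentGraph combParent) (Finset.range 12) = _ := comb_rec 8 rfl
    -- the first comb pair `10, 11` hangs from `7`, so `tree_rec` does not cover this case
    change indepPolyOn _ (Finset.range 12) = indepPolyOn _ (Finset.range 12)
    have h₁ : treeParent 10 = 7 := rfl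
    have h₂ : treeParent 11 = 10 := rfl
    rw [h, indepPolyOn_range_add_two _ 10 7, tree_ten, tree_ten_erase]
    · ring
    all_goals simp only [parentGraph_adj, h₁, h₂]
    · intro m hm
      have := treeParent_le m
      omega
    · intro m hm
      have := treeParent_le m
      omega
    · decide
  | more n ih₁ ih₂ =>
    have e₁ : 2 * (n + 1) + 10 = 2 * n + 10 + 2 := by ring
    have e₂ : 2 * (n + 2) + 10 = 2 * n + 10 + 4 := by ring
    rw [e₁] at ih₂
    rw [e₂, tree_rec _ (by omega) (by omega), comb_rec _ (by omega), ih₁, ih₂]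

/-! ### Failure of well-coveredness -/

/-- A dominating set (every other vertex has a neighbour in it) cannot be enlarged to an
independent set. -/
lemma maximal_of_dominating {N : ℕ} (G : SimpleGraph (Fin N)) (s : Finset (Fin N))
    (hdom : ∀ v ∉ s, ∃ u ∈ s, G.Adj v u) [DecidableEq (Fin N)] :
    ∀ v ∉ s, ¬ IsIndepFinset G (insert v s) := by
  intro v hv h
  obtain ⟨u, hu, huv⟩ := hdom v hv
  exact h v (Finset.mem_insert_self _ _) u (Finset.mem_insert_of_mem hu) huv

/-- `{0, 2, 5, 8} ∪ W` and `{0, 3, 5, 6, 8} ∪ W` are maximal independent sets of different sizes,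
where `W` consists of the pendant vertices `11, 13, …` of the comb part. -/
lemma tree_not_wellCovered (n : ℕ) (hn : 5 ≤ n) :
    ¬ WellCovered ((parentGraph treeParent).comap (Fin.val : Fin (2 * n) → ℕ)) := by
  classical
  set G := (parentGraph treeParent).comap (Fin.val : Fin (2 * n) → ℕ) with hG
  have hadj : ∀ a b : Fin (2 * n), G.Adj a b ↔
      a.val ≠ b.val ∧ (treeParent a = b ∨ treeParent b = a) := fun a b => by
    rw [hG, SimpleGraph.comap_adj, parentGraph_adj]
  let u : Finset (Fin (2 * n)) := Finset.univ.filter fun m =>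
    m.val = 0 ∨ m.val = 5 ∨ m.val = 8 ∨ (11 ≤ m.val ∧ m.val % 2 = 1)
  have hu : ∀ m, m ∈ u ↔ m.val = 0 ∨ m.val = 5 ∨ m.val = 8 ∨ (11 ≤ m.val ∧ m.val % 2 = 1) := by
    simp [u]
  let v2 : Fin (2 * n) := ⟨2, by omega⟩
  let v3 : Fin (2 * n) := ⟨3, by omega⟩
  let v6 : Fin (2 * n) := ⟨6, by omega⟩
  have hs : ∀ m, m ∈ insert v2 u ↔ m.val = 2 ∨ m.val = 0 ∨ m.val = 5 ∨ m.val = 8 ∨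
      (11 ≤ m.val ∧ m.val % 2 = 1) := by
    intro m
    rw [Finset.mem_insert, hu, Fin.ext_iff]
  have ht : ∀ m, m ∈ insert v3 (insert v6 u) ↔ m.val = 3 ∨ m.val = 6 ∨ m.val = 0 ∨ m.val = 5 ∨
      m.val = 8 ∨ (11 ≤ m.val ∧ m.val % 2 = 1) := by
    intro m
    rw [Finset.mem_insert, Finset.mem_insert, hu, Fin.ext_iff, Fin.ext_iff]
  have hindep : ∀ s : Finset (Fin (2 * n)),
      (∀ a ∈ s, ∀ b ∈ s, a.val ≠ b.val → treeParent a ≠ b) → IsIndepFinset G s := by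
    intro s h a ha b hb hab
    rw [hadj] at hab
    rcases hab with ⟨hne, hab | hab⟩
    · exact h a ha b hb hne hab
    · exact h b hb a ha hne.symm hab
  -- `u` already dominates everything outside `u` except `2`, `3` and `6`
  have hdom : ∀ s : Finset (Fin (2 * n)), (∀ m ∈ u, m ∈ s) →
      (∀ m : Fin (2 * n), m ∉ s → m.val = 2 ∨ m.val = 3 ∨ m.val = 6 → ∃ w ∈ s, G.Adj m w) →
      ∀ m ∉ s, ∃ w ∈ s, G.Adj m w := by
    intro s hus hs m hm
    have hmu := (hu m).not.1 fun h => hm (hus m h)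
    have hlt := m.2
    rcases le_or_gt 10 m.val with h | h
    · refine ⟨⟨m + 1, by omega⟩, hus _ ((hu _).2 (by simp only; omega)), (hadj _ _).2 ?_⟩
      have := @treeParent_odd (m + 1) (by omega) (by omega)
      simp only
      omega
    · have hcases : (m.val = 2 ∨ m.val = 3 ∨ m.val = 6) ∨ m.val = 1 ∨ m.val = 4 ∨ m.val = 7 ∨
          m.val = 9 := by omega
      rcases hcases with h | h | h | h | h
      · exact hs m hm h
      · exact ⟨⟨0, by omega⟩, hus _ ((hu _).2 (by simp)), (hadj _ _).2 (by simp [h, treeParent])⟩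
      · exact ⟨⟨5, by omega⟩, hus _ ((hu _).2 (by simp)), (hadj _ _).2 (by simp [h, treeParent])⟩
      · exact ⟨⟨8, by omega⟩, hus _ ((hu _).2 (by simp)), (hadj _ _).2 (by simp [h, treeParent])⟩
      · exact ⟨⟨8, by omega⟩, hus _ ((hu _).2 (by simp)), (hadj _ _).2 (by simp [h, treeParent])⟩
  intro hwc
  have hcard := hwc (insert v2 u) (insert v3 (insert v6 u)) ?_ ?_ ?_ ?_
  · rw [Finset.card_insert_of_notMem, Finset.card_insert_of_notMem,
      Finset.card_insert_of_notMem] at hcard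
    · omega
    · simp [hu, v6]
    · simp [hu, v3, v6]
    · simp [hu, v2]
  · refine hindep _ fun a ha b hb hne => ?_
    rw [hs] at ha hb
    rcases ha with h | h | h | h | ⟨h, h'⟩
    on_goal 5 => rw [treeParent_odd h h']; omega
    all_goals rw [h]; simp only [treeParent]; norm_num; omega
  · convert maximal_of_dominating G _ (hdom _ (fun m hm => Finset.mem_insert_of_mem hm) ?_)
    intro m hm h
    refine ⟨v2, Finset.mem_insert_self _ _, (hadj _ _).2 ?_⟩
    rw [hs] at hm
    have : m.val = 3 ∨ m.val = 6 := by omega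
    rcases this with h | h <;> simp [h, v2, treeParent]
  · refine hindep _ fun a ha b hb hne => ?_
    rw [ht] at ha hb
    rcases ha with h | h | h | h | h | ⟨h, h'⟩
    on_goal 6 => rw [treeParent_odd h h']; omega
    all_goals rw [h]; simp only [treeParent]; norm_num; omega
  · convert maximal_of_dominating G _ (hdom _ (fun m hm =>
      Finset.mem_insert_of_mem (Finset.mem_insert_of_mem hm)) ?_)
    intro m hm h
    refine ⟨v3, Finset.mem_insert_self _ _, (hadj _ _).2 ?_⟩
    rw [ht] at hm
    have : m.val = 2 := by omega
    simp [this, v3, treeParent]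

/-- For every `n ≥ 5`, there exists a tree on `2n` vertices that is not
well-covered but has the same independence polynomial as the well-covered tree `P_n*`. -/
theorem stmt15 (n : ℕ) (hn : 5 ≤ n) :
    ∃ G : SimpleGraph (Fin (2*n)), G.IsTree ∧ ¬ WellCovered G ∧
      indepPoly G = indepPoly (corona (pathGraph n)) := by
  refine ⟨(parentGraph treeParent).comap Fin.val,
    parentGraph_isTree _ rfl treeParent_lt _ (by omega), tree_not_wellCovered n hn, ?_⟩
  rw [indepPoly_corona_pathGraph,
    indepPoly_eq_indepPolyOn _ (parentGraph treeParent) Fin.valEmbedding fun _ _ => Iff.rfl]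
  obtain ⟨k, rfl⟩ := Nat.exists_eq_add_of_le hn
  have e : 2 * (5 + k) = 2 * k + 10 := by ring
  have e' : (Finset.univ : Finset (Fin (2 * (5 + k)))).map Fin.valEmbedding =
      Finset.range (2 * (5 + k)) := by
    ext m
    simp
  rw [e', e]
  exact tree_eq_comb k
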